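/- Let N ≥ 3 be an integer, m > 0, κ > 0, and let p be a real number with p ≥ (N+2)/(N−2). Suppose u : ℝ^N → [0,∞) is a C² function satisfying −Δu(x) + m·u(x) = κ·u(x)^p for all x ∈ ℝ^N, and that there exist constants C, c > 0 with u(x) + ‖∇u(x)‖ ≤ C·exp(−c‖x‖) for all x ∈ ℝ^N. Then u is identically zero. -/

import Mathlib

open MeasureTheory Real

/-- The Laplacian of `u` at `x`: the trace of the second derivative,
computed as the sum of pure second derivatives along the coordinate directions. -/
noncomputable def lap {N : ℕ} (u : EuclideanSpace ℝ (Fin N) → ℝ)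
    (x : EuclideanSpace ℝ (Fin N)) : ℝ :=
  ∑ i, iteratedFDeriv ℝ 2 u x ![EuclideanSpace.single i 1, EuclideanSpace.single i 1]

/-!
For a solution of `-Δ u = G' ∘ u`, multiplying the equation by the generator
`⟪x, ∇ u⟫ + (d - 2) / 2 * u` of the energy-preserving dilations gives Pohozaev's identity in
divergence form: a vector field built from `u` and `∇ u` has divergence
`d * G u - (d - 2) / 2 * u * G' u`. For `G' s = -m * s + κ * s ^ p` with `p` critical or
supercritical this is at most `-m * u ^ 2 ≤ 0`. When `u` has finite energy, the field is `1 + ‖x‖`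
times an integrable function, so its flux through cutoffs at scale `n`, whose gradients are
`O((1 + ‖x‖)⁻¹)`, tends to zero. A nonpositive divergence with vanishing flux is zero, hence
`u = 0`.
-/

open Filter Laplacian Gradient Module Topology
open scoped ENNReal RealInnerProductSpace

section Cutoff

variable {E : Type*} [NormedAddCommGroup E] [NormedSpace ℝ E]

/-- A sequence of `C¹` cutoff functions exhausting `E` whose derivatives decay like
`(1 + ‖x‖)⁻¹`, uniformly along the sequence; `K` is the decay constant. -/
structure IsCutoffSequence (φ : ℕ → E → ℝ) (K : ℝ) : Prop where
  contDiff : ∀ n, ContDiff ℝ 1 (φ n)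
  hasCompactSupport : ∀ n, HasCompactSupport (φ n)
  nonneg : ∀ n x, 0 ≤ φ n x
  eventuallyEq_one : ∀ x, ∀ᶠ n in atTop, φ n =ᶠ[𝓝 x] fun _ ↦ 1
  norm_fderiv_le : ∀ n x, ‖fderiv ℝ (φ n) x‖ ≤ K * (1 + ‖x‖)⁻¹

theorem IsCutoffSequence.tendsto_integral_fderiv_apply [MeasurableSpace E] [BorelSpace E]
    {μ : Measure E} {φ : ℕ → E → ℝ} {K : ℝ} (hφ : IsCutoffSequence φ K)
    {V : E → E} (hV : Continuous V)
    (hint : Integrable (fun x ↦ (1 + ‖x‖)⁻¹ * ‖V x‖) μ) :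
    Tendsto (fun n ↦ ∫ x, fderiv ℝ (φ n) x (V x) ∂μ) atTop (𝓝 0) := by
  rw [← integral_zero E ℝ (μ := μ)]
  refine tendsto_integral_of_dominated_convergence _ (fun n ↦ ?_) (hint.const_mul K)
    (fun n ↦ ae_of_all _ fun x ↦ ?_) (ae_of_all _ fun x ↦ ?_)
  · exact (((hφ.contDiff n).continuous_fderiv one_ne_zero).clm_apply hV).aestronglyMeasurable
  · calc ‖fderiv ℝ (φ n) x (V x)‖ ≤ ‖fderiv ℝ (φ n) x‖ * ‖V x‖ := ContinuousLinearMap.le_opNorm _ _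
      _ ≤ K * (1 + ‖x‖)⁻¹ * ‖V x‖ := by gcongr; exact hφ.norm_fderiv_le n x
      _ = K * ((1 + ‖x‖)⁻¹ * ‖V x‖) := mul_assoc ..
  · refine tendsto_const_nhds.congr' ?_
    filter_upwards [hφ.eventuallyEq_one x] with n hn
    simp [hn.fderiv_eq]

variable (E) in
theorem exists_isCutoffSequence [FiniteDimensional ℝ E] :
    ∃ (φ : ℕ → E → ℝ) (K : ℝ), IsCutoffSequence φ K := by
  let ψ : ContDiffBump (0 : E) := ⟨1, 2, one_pos, one_lt_two⟩
  have hψ : ContDiff ℝ 1 ψ := ψ.contDiff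
  obtain ⟨K, hK⟩ := (ψ.hasCompactSupport.fderiv (𝕜 := ℝ)).smul_left
    (f := fun y : E ↦ 1 + ‖y‖) |>.exists_bound_of_continuous
    (by have := hψ.continuous_fderiv one_ne_zero; fun_prop)
  have hscale (n : ℕ) : (n + 1 : ℝ)⁻¹ ≤ 1 := inv_le_one_of_one_le₀ (by simp)
  refine ⟨fun n x ↦ ψ ((n + 1 : ℝ)⁻¹ • x), K, ⟨fun n ↦ hψ.comp (contDiff_const_smul _),
    fun n ↦ ψ.hasCompactSupport.comp_homeomorph (Homeomorph.smulOfNeZero _ (by positivity)),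
    fun n x ↦ ψ.nonneg, fun x ↦ ?_, fun n x ↦ ?_⟩⟩
  · have hlim : Tendsto (fun n : ℕ ↦ (n + 1 : ℝ)⁻¹ • x) atTop (𝓝 0) := by
      simpa using (tendsto_one_div_add_atTop_nhds_zero_nat (𝕜 := ℝ)).smul_const x
    filter_upwards [hlim.eventually (Metric.ball_mem_nhds 0 one_pos)] with n hn
    have hcont : Continuous fun y : E ↦ (n + 1 : ℝ)⁻¹ • y := by fun_prop
    filter_upwards [hcont.continuousAt.eventually (Metric.isOpen_ball.mem_nhds hn)] with y hy
    exact ψ.one_of_mem_closedBall (Metric.ball_subset_closedBall hy)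
  · rw [fderiv_comp_smul, ← div_eq_mul_inv, le_div_iff₀ (by positivity)]
    calc ‖(n + 1 : ℝ)⁻¹ • fderiv ℝ ψ ((n + 1 : ℝ)⁻¹ • x)‖ * (1 + ‖x‖)
        = ((n + 1 : ℝ)⁻¹ + ‖(n + 1 : ℝ)⁻¹ • x‖) * ‖fderiv ℝ ψ ((n + 1 : ℝ)⁻¹ • x)‖ := by
          rw [norm_smul, norm_smul, Real.norm_of_nonneg (by positivity)]; ring
      _ ≤ (1 + ‖(n + 1 : ℝ)⁻¹ • x‖) * ‖fderiv ℝ ψ ((n + 1 : ℝ)⁻¹ • x)‖ := by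
          gcongr; exact hscale n
      _ = ‖(1 + ‖(n + 1 : ℝ)⁻¹ • x‖) • fderiv ℝ ψ ((n + 1 : ℝ)⁻¹ • x)‖ := by
          rw [norm_smul _ (fderiv ℝ ψ _), Real.norm_of_nonneg (by positivity)]
      _ ≤ K := hK _

end Cutoff

section Divergence

variable {E : Type*} [NormedAddCommGroup E] [NormedSpace ℝ E]

/-- The divergence of a vector field: the trace of its derivative. It has the junk value `0` where
the field is not differentiable, and everywhere on an infinite-dimensional space. -/
noncomputable def divergence (V : E → E) (x : E) : ℝ :=
  LinearMap.trace ℝ E (fderiv ℝ V x)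

theorem divergence_add {V W : E → E} {x : E} (hV : DifferentiableAt ℝ V x)
    (hW : DifferentiableAt ℝ W x) :
    divergence (fun y ↦ V y + W y) x = divergence V x + divergence W x := by
  simp only [divergence, fderiv_fun_add hV hW, ContinuousLinearMap.toLinearMap_add, map_add]

variable [FiniteDimensional ℝ E]

theorem divergence_id (x : E) : divergence (fun y ↦ y) x = finrank ℝ E := by
  simp [divergence, LinearMap.trace_id]

theorem divergence_smul {φ : E → ℝ} {V : E → E} {x : E} (hφ : DifferentiableAt ℝ φ x)
    (hV : DifferentiableAt ℝ V x) :
    divergence (fun y ↦ φ y • V y) x = φ x * divergence V x + fderiv ℝ φ x (V x) := by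
  have htrace : LinearMap.trace ℝ E ((fderiv ℝ φ x).smulRight (V x)) = fderiv ℝ φ x (V x) :=
    LinearMap.trace_smulRight (fderiv ℝ φ x : E →ₗ[ℝ] ℝ) (V x)
  simp only [divergence, fderiv_fun_smul hφ hV, ContinuousLinearMap.toLinearMap_add,
    ContinuousLinearMap.toLinearMap_smul, map_add, map_smul, smul_eq_mul, htrace]

theorem continuous_divergence {V : E → E} (hV : ContDiff ℝ 1 V) : Continuous (divergence V) :=
  (LinearMap.continuous_of_finiteDimensional
    (LinearMap.trace ℝ E ∘ₗ ContinuousLinearMap.coeLM ℝ)).comp (hV.continuous_fderiv one_ne_zero)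

theorem divergence_eq_sum_fderiv_coord {ι : Type*} [Fintype ι] (b : Basis ι ℝ E) {V : E → E}
    {x : E} (hV : DifferentiableAt ℝ V x) :
    divergence V x = ∑ i, fderiv ℝ (fun y ↦ b.coord i (V y)) x (b i) := by
  classical
  have hcoord (i : ι) : fderiv ℝ (fun y ↦ b.coord i (V y)) x (b i)
      = b.coord i (fderiv ℝ V x (b i)) :=
    congrArg (· (b i))
      ((LinearMap.toContinuousLinearMap (b.coord i)).hasFDerivAt.comp x hV.hasFDerivAt).fderiv
  rw [divergence, LinearMap.trace_eq_matrix_trace ℝ b, Matrix.trace]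
  refine Finset.sum_congr rfl fun i _ ↦ ?_
  rw [hcoord, Matrix.diag_apply, LinearMap.toMatrix_apply, Basis.coord_apply,
    ContinuousLinearMap.coe_coe]

variable [MeasurableSpace E] [BorelSpace E] {μ : Measure E} [μ.IsAddHaarMeasure]

theorem integral_fderiv_apply_eq_zero {F : Type*} [NormedAddCommGroup F] [NormedSpace ℝ F]
    {f : E → F} (hf : ContDiff ℝ 1 f) (hfc : HasCompactSupport f) (v : E) :
    ∫ x, fderiv ℝ f x v ∂μ = 0 := by
  have hf' : Integrable (fun x ↦ fderiv ℝ f x v) μ :=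
    ((hf.continuous_fderiv one_ne_zero).clm_apply continuous_const).integrable_of_hasCompactSupport
      (hfc.fderiv_apply (𝕜 := ℝ) v)
  simpa using integral_smul_fderiv_eq_neg_fderiv_smul_of_integrable (μ := μ) (v := v)
    (f := fun _ ↦ (1 : ℝ)) (g := f) (by simp) (by simpa using hf')
    (by simpa using hf.continuous.integrable_of_hasCompactSupport hfc)
    (fun x _ ↦ differentiableAt_const 1) (fun x _ ↦ hf.differentiable one_ne_zero x)

theorem integral_divergence_eq_zero {V : E → E} (hV : ContDiff ℝ 1 V)
    (hVc : HasCompactSupport V) : ∫ x, divergence V x ∂μ = 0 := by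
  let b := Module.finBasis ℝ E
  have hcoord (i) : ContDiff ℝ 1 (fun y ↦ b.coord i (V y)) :=
    (LinearMap.toContinuousLinearMap (b.coord i)).contDiff.comp hV
  have hsupp (i) : HasCompactSupport (fun y ↦ b.coord i (V y)) :=
    hVc.comp_left (g := b.coord i) (map_zero _)
  have hint (i) : Integrable (fun x ↦ fderiv ℝ (fun y ↦ b.coord i (V y)) x (b i)) μ :=
    (((hcoord i).continuous_fderiv one_ne_zero).clm_apply
      continuous_const).integrable_of_hasCompactSupport ((hsupp i).fderiv_apply (𝕜 := ℝ) (b i))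
  simp only [divergence_eq_sum_fderiv_coord b (hV.differentiable one_ne_zero _)]
  rw [integral_finsetSum _ fun i _ ↦ hint i]
  exact Finset.sum_eq_zero fun i _ ↦ integral_fderiv_apply_eq_zero (hcoord i) (hsupp i) (b i)

theorem integral_mul_divergence {φ : E → ℝ} {V : E → E} (hφ : ContDiff ℝ 1 φ)
    (hφc : HasCompactSupport φ) (hV : ContDiff ℝ 1 V) :
    ∫ x, φ x * divergence V x ∂μ = -∫ x, fderiv ℝ φ x (V x) ∂μ := by
  have hdiv (x : E) := divergence_smul (hφ.differentiable one_ne_zero x)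
    (hV.differentiable one_ne_zero x)
  have h := integral_divergence_eq_zero (μ := μ) (hφ.smul hV) hφc.smul_right
  simp only [Pi.smul_def', hdiv] at h
  rw [integral_add] at h
  · exact eq_neg_of_add_eq_zero_left h
  · exact (hφ.continuous.mul (continuous_divergence hV)).integrable_of_hasCompactSupport
      hφc.mul_right
  · refine ((hφ.continuous_fderiv one_ne_zero).clm_apply
      hV.continuous).integrable_of_hasCompactSupport ((hφc.fderiv (𝕜 := ℝ)).mono' fun x hx ↦ ?_)
    exact subset_closure fun h0 ↦ hx (by simp [h0])

theorem divergence_eq_zero_of_nonpos {V : E → E} (hV : ContDiff ℝ 1 V)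
    (hint : Integrable (fun x ↦ (1 + ‖x‖)⁻¹ * ‖V x‖) μ) (hdiv : ∀ x, divergence V x ≤ 0) :
    divergence V = 0 := by
  obtain ⟨φ, K, hφ⟩ := exists_isCutoffSequence E
  have hcont := continuous_divergence hV
  have hprod (n : ℕ) : Continuous fun x ↦ φ n x * -divergence V x :=
    (hφ.contDiff n).continuous.mul hcont.neg
  have hflux : Tendsto (fun n ↦ ∫ x, φ n x * -divergence V x ∂μ) atTop (𝓝 0) := by
    simpa only [mul_neg, integral_neg, neg_neg,
      integral_mul_divergence (hφ.contDiff _) (hφ.hasCompactSupport _) hV] using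
      hφ.tendsto_integral_fderiv_apply hV.continuous hint
  have hliminf (x : E) : liminf (fun n ↦ ENNReal.ofReal (φ n x * -divergence V x)) atTop
      = ENNReal.ofReal (-divergence V x) := by
    refine (tendsto_const_nhds.congr' ?_).liminf_eq
    filter_upwards [hφ.eventuallyEq_one x] with n hn
    rw [hn.eq_of_nhds, one_mul]
  have hfatou : ∫⁻ x, ENNReal.ofReal (-divergence V x) ∂μ ≤ 0 :=
    calc ∫⁻ x, ENNReal.ofReal (-divergence V x) ∂μ
        ≤ liminf (fun n ↦ ∫⁻ x, ENNReal.ofReal (φ n x * -divergence V x) ∂μ) atTop := by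
          simpa only [hliminf] using lintegral_liminf_le (u := atTop) (μ := μ)
            fun n ↦ (hprod n).measurable.ennreal_ofReal
      _ = liminf (fun n ↦ ENNReal.ofReal (∫ x, φ n x * -divergence V x ∂μ)) atTop := by
          congr! with n
          exact (ofReal_integral_eq_lintegral_ofReal
            ((hprod n).integrable_of_hasCompactSupport (hφ.hasCompactSupport n).mul_right)
            (ae_of_all _ fun x ↦ mul_nonneg (hφ.nonneg n x) (neg_nonneg.2 (hdiv x)))).symm
      _ = 0 := by simpa using (ENNReal.tendsto_ofReal hflux).liminf_eq
  have hae : divergence V =ᵐ[μ] 0 := by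
    filter_upwards [(lintegral_eq_zero_iff hcont.neg.measurable.ennreal_ofReal).1
      (nonpos_iff_eq_zero.1 hfatou)] with x hx
    exact (hdiv x).antisymm (by simpa using hx)
  exact (hcont.ae_eq_iff_eq μ continuous_zero).1 hae

end Divergence

section Gradient

variable {E : Type*} [NormedAddCommGroup E] [InnerProductSpace ℝ E] [CompleteSpace E]
  {u : E → ℝ} {x : E}

theorem contDiffAt_gradient {m n : WithTop ℕ∞} (hu : ContDiffAt ℝ n u x) (hmn : m + 1 ≤ n) :
    ContDiffAt ℝ m (∇ u) x :=
  (InnerProductSpace.toDual ℝ E).symm.contDiff.contDiffAt.comp x (hu.fderiv_right hmn)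

theorem contDiff_gradient {m n : WithTop ℕ∞} (hu : ContDiff ℝ n u) (hmn : m + 1 ≤ n) :
    ContDiff ℝ m (∇ u) :=
  contDiff_iff_contDiffAt.2 fun _ ↦ contDiffAt_gradient hu.contDiffAt hmn

theorem inner_fderiv_gradient_left (hu : ContDiffAt ℝ 2 u x) (v w : E) :
    ⟪fderiv ℝ (∇ u) x v, w⟫ = fderiv ℝ (fderiv ℝ u) x v w := by
  have hu' : DifferentiableAt ℝ (fderiv ℝ u) x :=
    (hu.fderiv_right (m := 1) (by norm_num)).differentiableAt one_ne_zero
  have hgrad : fderiv ℝ (∇ u) x v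
      = (InnerProductSpace.toDual ℝ E).symm (fderiv ℝ (fderiv ℝ u) x v) :=
    congrArg (· v) ((InnerProductSpace.toDual ℝ E).symm.toContinuousLinearEquiv.hasFDerivAt.comp x
      hu'.hasFDerivAt).fderiv
  rw [hgrad, InnerProductSpace.toDual_symm_apply]

theorem inner_fderiv_gradient_comm (hu : ContDiffAt ℝ 2 u x) (v w : E) :
    ⟪fderiv ℝ (∇ u) x v, w⟫ = ⟪fderiv ℝ (∇ u) x w, v⟫ := by
  rw [inner_fderiv_gradient_left hu, inner_fderiv_gradient_left hu]
  exact (hu.isSymmSndFDerivAt (by simp)) v w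

end Gradient

section Pohozaev

variable {E : Type*} [NormedAddCommGroup E] [InnerProductSpace ℝ E] [FiniteDimensional ℝ E]
  {G : ℝ → ℝ} {u : E → ℝ} {x : E}

theorem divergence_gradient (hu : ContDiffAt ℝ 2 u x) : divergence (∇ u) x = Δ u x := by
  rw [divergence, LinearMap.trace_eq_sum_inner _ (stdOrthonormalBasis ℝ E),
    InnerProductSpace.laplacian_eq_iteratedFDeriv_stdOrthonormalBasis]
  refine Finset.sum_congr rfl fun i _ ↦ ?_
  rw [real_inner_comm, ContinuousLinearMap.coe_coe, inner_fderiv_gradient_left hu,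
    iteratedFDeriv_two_apply]
  rfl

/-- The Pohozaev vector field of `u` for the equation `-Δ u = G' ∘ u`: the Noether current of the
dilations `u ↦ t ^ ((d - 2) / 2) * u (t • ·)`, `d` being the dimension. The exponent is the one that
preserves `∫ ‖∇ u‖ ^ 2`, so that no gradient terms remain in the divergence. -/
noncomputable def pohozaevField (G : ℝ → ℝ) (u : E → ℝ) (x : E) : E :=
  (⟪x, ∇ u x⟫ + (finrank ℝ E - 2) / 2 * u x) • ∇ u x + (G (u x) - ‖∇ u x‖ ^ 2 / 2) • x

theorem contDiff_pohozaevField (hG : ContDiff ℝ 1 G) (hu : ContDiff ℝ 2 u) :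
    ContDiff ℝ 1 (pohozaevField G u) := by
  have hu1 : ContDiff ℝ 1 u := hu.of_le one_le_two
  have hgrad : ContDiff ℝ 1 (∇ u) := contDiff_gradient hu (by norm_num)
  exact (((contDiff_id.inner ℝ hgrad).add (contDiff_const.mul hu1)).smul hgrad).add
    (((hG.comp hu1).sub ((hgrad.norm_sq ℝ).div_const 2)).smul contDiff_id)

theorem norm_pohozaevField_le (G : ℝ → ℝ) (u : E → ℝ) (x : E) :
    ‖pohozaevField G u x‖ ≤ (1 + ‖x‖) *
      ((3 / 2 + |((finrank ℝ E : ℝ) - 2) / 2|) * (‖∇ u x‖ ^ 2 + u x ^ 2) + |G (u x)|) := by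
  set k : ℝ := ((finrank ℝ E : ℝ) - 2) / 2
  have hyoung : |u x| * ‖∇ u x‖ ≤ ‖∇ u x‖ ^ 2 + u x ^ 2 := by
    linarith [two_mul_le_add_sq |u x| ‖∇ u x‖, sq_abs (u x), mul_nonneg (abs_nonneg (u x))
      (norm_nonneg (∇ u x))]
  have hdilation : |⟪x, ∇ u x⟫ + k * u x| ≤ ‖x‖ * ‖∇ u x‖ + |k| * |u x| :=
    (abs_add_le _ _).trans (add_le_add (abs_real_inner_le_norm _ _) (abs_mul _ _).le)
  have hdensity : |G (u x) - ‖∇ u x‖ ^ 2 / 2| ≤ |G (u x)| + ‖∇ u x‖ ^ 2 / 2 :=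
    (abs_sub _ _).trans_eq (by rw [abs_of_nonneg (by positivity : 0 ≤ ‖∇ u x‖ ^ 2 / 2)])
  calc ‖pohozaevField G u x‖
      ≤ |⟪x, ∇ u x⟫ + k * u x| * ‖∇ u x‖ + |G (u x) - ‖∇ u x‖ ^ 2 / 2| * ‖x‖ := by
        refine (norm_add_le _ _).trans_eq ?_
        rw [norm_smul, norm_smul, Real.norm_eq_abs, Real.norm_eq_abs]
    _ ≤ (‖x‖ * ‖∇ u x‖ + |k| * |u x|) * ‖∇ u x‖ + (|G (u x)| + ‖∇ u x‖ ^ 2 / 2) * ‖x‖ := by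
        gcongr
    _ = ‖x‖ * (3 / 2 * ‖∇ u x‖ ^ 2 + |G (u x)|) + |k| * (|u x| * ‖∇ u x‖) := by ring
    _ ≤ ‖x‖ * (3 / 2 * ‖∇ u x‖ ^ 2 + |G (u x)|) + |k| * (‖∇ u x‖ ^ 2 + u x ^ 2)
        + (‖x‖ * (3 / 2 * u x ^ 2 + |k| * (‖∇ u x‖ ^ 2 + u x ^ 2))
          + (3 / 2 * (‖∇ u x‖ ^ 2 + u x ^ 2) + |G (u x)|)) := by
        refine le_add_of_le_of_nonneg ?_ (by positivity)
        gcongr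
    _ = _ := by ring

theorem divergence_dilation_smul_gradient (k : ℝ) (hu : ContDiffAt ℝ 2 u x) :
    divergence (fun y ↦ (⟪y, ∇ u y⟫ + k * u y) • ∇ u y) x =
      (⟪x, ∇ u x⟫ + k * u x) * Δ u x
        + (⟪x, fderiv ℝ (∇ u) x (∇ u x)⟫ + ‖∇ u x‖ ^ 2 + k * ‖∇ u x‖ ^ 2) := by
  have hgrad : DifferentiableAt ℝ (∇ u) x :=
    (contDiffAt_gradient (m := 1) hu (by norm_num)).differentiableAt one_ne_zero
  have hdilation : HasFDerivAt (fun y ↦ ⟪y, ∇ u y⟫ + k * u y) _ x :=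
    ((hasFDerivAt_id x).inner ℝ hgrad.hasFDerivAt).add
      ((hu.differentiableAt two_ne_zero).hasFDerivAt.const_mul k)
  rw [divergence_smul hdilation.differentiableAt hgrad, divergence_gradient hu, hdilation.fderiv]
  simp [← inner_gradient_left]

theorem divergence_lagrangian_smul_id (hG : DifferentiableAt ℝ G (u x)) (hu : ContDiffAt ℝ 2 u x) :
    divergence (fun y ↦ (G (u y) - ‖∇ u y‖ ^ 2 / 2) • y) x =
      (G (u x) - ‖∇ u x‖ ^ 2 / 2) * finrank ℝ E
        + (deriv G (u x) * ⟪∇ u x, x⟫ - ⟪∇ u x, fderiv ℝ (∇ u) x x⟫) := by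
  have hgrad : DifferentiableAt ℝ (∇ u) x :=
    (contDiffAt_gradient (m := 1) hu (by norm_num)).differentiableAt one_ne_zero
  have hlagrangian : HasFDerivAt (fun y ↦ G (u y) - ‖∇ u y‖ ^ 2 / 2) _ x :=
    (hG.hasDerivAt.comp_hasFDerivAt x (hu.differentiableAt two_ne_zero).hasFDerivAt).sub
      (hgrad.hasFDerivAt.norm_sq.mul_const (2⁻¹ : ℝ))
  rw [divergence_smul hlagrangian.differentiableAt differentiableAt_fun_id, divergence_id,
    hlagrangian.fderiv]
  simp [← inner_gradient_left]

theorem divergence_pohozaevField (hG : DifferentiableAt ℝ G (u x)) (hu : ContDiffAt ℝ 2 u x) :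
    divergence (pohozaevField G u) x =
      (⟪x, ∇ u x⟫ + (finrank ℝ E - 2) / 2 * u x) * (Δ u x + deriv G (u x))
        + (finrank ℝ E * G (u x) - (finrank ℝ E - 2) / 2 * (u x * deriv G (u x))) := by
  have hu' : DifferentiableAt ℝ u x := hu.differentiableAt two_ne_zero
  have hgrad : DifferentiableAt ℝ (∇ u) x :=
    (contDiffAt_gradient (m := 1) hu (by norm_num)).differentiableAt one_ne_zero
  have hhessian : ⟪∇ u x, fderiv ℝ (∇ u) x x⟫ = ⟪x, fderiv ℝ (∇ u) x (∇ u x)⟫ := by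
    rw [real_inner_comm, inner_fderiv_gradient_comm hu, real_inner_comm]
  calc divergence (pohozaevField G u) x
      = divergence (fun y ↦ (⟪y, ∇ u y⟫ + (finrank ℝ E - 2) / 2 * u y) • ∇ u y) x
        + divergence (fun y ↦ (G (u y) - ‖∇ u y‖ ^ 2 / 2) • y) x :=
        divergence_add
          (((differentiableAt_fun_id.inner ℝ hgrad).add (hu'.const_mul _)).smul hgrad)
          (((hG.comp x hu').sub ((hgrad.norm_sq ℝ).mul_const (2⁻¹ : ℝ))).smul
            differentiableAt_fun_id)
    _ = _ := by
        rw [divergence_dilation_smul_gradient _ hu, divergence_lagrangian_smul_id hG hu, hhessian,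
          real_inner_comm x]
        ring

section Integral

variable [MeasurableSpace E] [BorelSpace E] {μ : Measure E}

theorem integrable_norm_pohozaevField (hG : ContDiff ℝ 1 G) (hu : ContDiff ℝ 2 u)
    (hu_sq : MemLp u 2 μ) (hgrad_sq : MemLp (∇ u) 2 μ) (hG_int : Integrable (fun x ↦ G (u x)) μ) :
    Integrable (fun x ↦ (1 + ‖x‖)⁻¹ * ‖pohozaevField G u x‖) μ := by
  have hfield : Continuous (pohozaevField G u) := (contDiff_pohozaevField hG hu).continuous
  have hbound : Integrable (fun x ↦ (3 / 2 + |((finrank ℝ E : ℝ) - 2) / 2|) *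
      (‖∇ u x‖ ^ 2 + u x ^ 2) + |G (u x)|) μ :=
    (((memLp_two_iff_integrable_sq_norm hgrad_sq.1).1 hgrad_sq).add
      ((memLp_two_iff_integrable_sq hu_sq.1).1 hu_sq)).const_mul _ |>.add hG_int.abs
  refine hbound.mono' (by fun_prop (disch := intro; positivity)) (ae_of_all _ fun x ↦ ?_)
  rw [norm_mul, norm_norm, norm_of_nonneg (by positivity : (0 : ℝ) ≤ (1 + ‖x‖)⁻¹),
    inv_mul_le_iff₀ (by positivity)]
  exact norm_pohozaevField_le G u x

theorem pohozaev_eq_of_le [μ.IsAddHaarMeasure] (hG : ContDiff ℝ 1 G) (hu : ContDiff ℝ 2 u)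
    (heq : ∀ x, -Δ u x = deriv G (u x)) (hu_sq : MemLp u 2 μ) (hgrad_sq : MemLp (∇ u) 2 μ)
    (hG_int : Integrable (fun x ↦ G (u x)) μ)
    (hle : ∀ x, finrank ℝ E * G (u x) ≤ (finrank ℝ E - 2) / 2 * (u x * deriv G (u x))) (x : E) :
    finrank ℝ E * G (u x) = (finrank ℝ E - 2) / 2 * (u x * deriv G (u x)) := by
  have hdiv (y : E) : divergence (pohozaevField G u) y
      = finrank ℝ E * G (u y) - (finrank ℝ E - 2) / 2 * (u y * deriv G (u y)) := by
    rw [divergence_pohozaevField (hG.differentiable one_ne_zero _) hu.contDiffAt, ← heq,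
      add_neg_cancel, mul_zero, zero_add]
  have hzero : divergence (pohozaevField G u) = 0 :=
    divergence_eq_zero_of_nonpos (contDiff_pohozaevField hG hu)
      (integrable_norm_pohozaevField hG hu hu_sq hgrad_sq hG_int)
      fun y ↦ (hdiv y).trans_le (sub_nonpos.2 (hle y))
  exact sub_eq_zero.1 ((hdiv x).symm.trans (congrFun hzero x))

end Integral

end Pohozaev

section PowerNonlinearity

/-- The primitive vanishing at `0` of the nonlinearity `s ↦ -m * s + κ * (|s| ^ (p - 1) * s)`,
the odd extension of `-m * s + κ * s ^ p`. -/
noncomputable def powerPotential (m κ p s : ℝ) : ℝ :=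
  -(m / 2) * s ^ 2 + κ / (p + 1) * |s| ^ (p + 1)

variable {m κ p : ℝ}

theorem contDiff_powerPotential (hp : 0 < p) : ContDiff ℝ 1 (powerPotential m κ p) :=
  (contDiff_const.mul (contDiff_id.pow 2)).add
    (contDiff_const.mul (contDiff_norm_rpow (E := ℝ) (lt_add_of_pos_left 1 hp)))

theorem deriv_powerPotential (hp : 0 < p) (s : ℝ) :
    deriv (powerPotential m κ p) s = -m * s + κ * (|s| ^ (p - 1) * s) := by
  have h : HasDerivAt (powerPotential m κ p) _ s :=
    (((hasDerivAt_id s).pow 2).const_mul (-(m / 2))).add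
      ((hasDerivAt_abs_rpow s (lt_add_of_pos_left 1 hp)).const_mul (κ / (p + 1)))
  have hpow : (p + 1 - 2 : ℝ) = p - 1 := by ring
  rw [h.deriv, hpow, id, Nat.add_one_sub_one, pow_one, Nat.cast_ofNat]
  field_simp

theorem one_lt_of_critical_le {d : ℝ} (hd : 2 < d) (hp : (d + 2) / (d - 2) ≤ p) : 1 < p :=
  ((one_lt_div (by linarith)).2 (by linarith)).trans_le hp

theorem abs_rpow_sub_one_mul_sq (hp : 0 < p) (s : ℝ) : |s| ^ (p - 1) * s ^ 2 = |s| ^ (p + 1) := by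
  have hexp : p - 1 + (2 : ℕ) = p + 1 := by
    push_cast
    ring
  rw [← sq_abs, ← rpow_add_natCast' (abs_nonneg s) (by linarith), hexp]

theorem powerPotential_pohozaev_le {d : ℝ} (hd : 2 < d) (hκ : 0 ≤ κ)
    (hp : (d + 2) / (d - 2) ≤ p) (s : ℝ) :
    d * powerPotential m κ p s - (d - 2) / 2 * (s * deriv (powerPotential m κ p) s)
      ≤ -m * s ^ 2 := by
  have hp_pos : 0 < p := zero_lt_one.trans (one_lt_of_critical_le hd hp)
  have hcritical : d / (p + 1) ≤ (d - 2) / 2 := by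
    rw [div_le_iff₀ (by linarith : 0 < d - 2)] at hp
    rw [div_le_div_iff₀ (by linarith) two_pos]
    linarith
  calc d * powerPotential m κ p s - (d - 2) / 2 * (s * deriv (powerPotential m κ p) s)
      = -m * s ^ 2 + (d / (p + 1) - (d - 2) / 2) * (κ * |s| ^ (p + 1)) := by
        rw [deriv_powerPotential hp_pos, powerPotential, ← abs_rpow_sub_one_mul_sq hp_pos]
        ring
    _ ≤ -m * s ^ 2 := add_le_of_nonpos_right
        (mul_nonpos_of_nonpos_of_nonneg (sub_nonpos.2 hcritical) (by positivity))

end PowerNonlinearity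

section ExponentialDecay

variable {E : Type*} [NormedAddCommGroup E] [NormedSpace ℝ E] [FiniteDimensional ℝ E]
  [MeasurableSpace E] [BorelSpace E] {μ : Measure E} [μ.IsAddHaarMeasure]

theorem integrable_exp_neg_mul_norm {a : ℝ} (ha : 0 < a) :
    Integrable (fun x ↦ exp (-a * ‖x‖)) μ := by
  have hnorm : Tendsto (fun x : E ↦ 1 + ‖x‖) (cocompact E) atTop :=
    tendsto_atTop_add_const_left _ _ tendsto_norm_cocompact_atTop
  have hdecay : (fun x : E ↦ exp (-a * ‖x‖)) =O[cocompact E]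
      fun x ↦ (1 + ‖x‖) ^ (-(finrank ℝ E + 1 : ℝ)) := by
    have h := ((isLittleO_exp_neg_mul_rpow_atTop ha
      (-(finrank ℝ E + 1 : ℝ))).comp_tendsto hnorm).isBigO.const_mul_left (exp a)
    refine h.congr_left fun x ↦ ?_
    rw [Function.comp_apply, ← exp_add]
    ring_nf
  refine (by fun_prop : Continuous fun x : E ↦ exp (-a * ‖x‖)).locallyIntegrable
    |>.integrable_of_isBigO_cocompact hdecay ?_
  exact (integrable_one_add_norm (by linarith)).integrableAtFilter _

theorem memLp_of_norm_le_exp {F : Type*} [NormedAddCommGroup F] {f : E → F} {C c : ℝ}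
    (hf : AEStronglyMeasurable f μ) (hc : 0 < c)
    (hbound : ∀ x, ‖f x‖ ≤ C * exp (-c * ‖x‖)) (q : ℝ≥0∞) : MemLp f q μ := by
  rcases eq_or_ne q 0 with rfl | hq
  · exact memLp_zero_iff_aestronglyMeasurable.2 hf
  have hexp : MemLp (fun x : E ↦ exp (-c * ‖x‖)) q μ := by
    have hmeas : AEStronglyMeasurable (fun x : E ↦ exp (-c * ‖x‖)) μ :=
      (by fun_prop : Continuous fun x : E ↦ exp (-c * ‖x‖)).aestronglyMeasurable
    rcases eq_or_ne q ⊤ with rfl | hq_top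
    · refine memLp_top_of_bound hmeas 1 (ae_of_all _ fun x ↦ ?_)
      rw [norm_of_nonneg (exp_pos _).le, exp_le_one_iff, neg_mul, neg_nonpos]
      positivity
    · rw [← integrable_norm_rpow_iff hmeas hq hq_top]
      refine (integrable_exp_neg_mul_norm
        (mul_pos hc (ENNReal.toReal_pos hq hq_top))).congr (ae_of_all _ fun x ↦ ?_)
      beta_reduce
      rw [norm_of_nonneg (exp_pos _).le, ← exp_mul]
      ring_nf
  exact (hexp.const_mul C).mono' hf (ae_of_all _ hbound)

end ExponentialDecay

section Rigidity

variable {E : Type*} [NormedAddCommGroup E] [InnerProductSpace ℝ E] [FiniteDimensional ℝ E]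
  [MeasurableSpace E] [BorelSpace E]

theorem no_nontrivial_solution_critical_or_supercritical_general {μ : Measure E}
    [μ.IsAddHaarMeasure] (hE : 3 ≤ finrank ℝ E) {m κ p : ℝ} (hm : 0 < m) (hκ : 0 ≤ κ)
    (hp : ((finrank ℝ E : ℝ) + 2) / ((finrank ℝ E : ℝ) - 2) ≤ p)
    {u : E → ℝ} (hu : ContDiff ℝ 2 u)
    (heq : ∀ x, -Δ u x + m * u x = κ * (|u x| ^ (p - 1) * u x))
    (hu_sq : MemLp u 2 μ) (hgrad_sq : MemLp (∇ u) 2 μ)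
    (hu_pow : MemLp u (ENNReal.ofReal (p + 1)) μ) (x : E) : u x = 0 := by
  have hd : (2 : ℝ) < finrank ℝ E := by exact_mod_cast hE
  have hp_pos : 0 < p := zero_lt_one.trans (one_lt_of_critical_le hd hp)
  set G := powerPotential m κ p
  have hdefect (y : E) : finrank ℝ E * G (u y) - (finrank ℝ E - 2) / 2 * (u y * deriv G (u y))
      ≤ -m * u y ^ 2 := powerPotential_pohozaev_le hd hκ hp (u y)
  have hG_int : Integrable (fun y ↦ G (u y)) μ := by
    have hpow := hu_pow.integrable_norm_rpow (ENNReal.ofReal_pos.2 (by linarith)).ne'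
      ENNReal.ofReal_ne_top
    rw [ENNReal.toReal_ofReal (by linarith)] at hpow
    exact (((memLp_two_iff_integrable_sq hu_sq.1).1 hu_sq).const_mul _).add (hpow.const_mul _)
  have heq' (y : E) : -Δ u y = deriv G (u y) := by
    rw [deriv_powerPotential hp_pos]
    linarith [heq y]
  have hpohozaev := pohozaev_eq_of_le (contDiff_powerPotential hp_pos) hu heq' hu_sq hgrad_sq
    hG_int (fun y ↦ sub_nonpos.1 ((hdefect y).trans (by nlinarith [sq_nonneg (u y)]))) x
  have hsq : m * u x ^ 2 ≤ 0 := by linarith [hdefect x]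
  exact pow_eq_zero_iff two_ne_zero |>.1
    (le_antisymm (nonpos_of_mul_nonpos_right hsq hm) (sq_nonneg _))

end Rigidity

theorem lap_eq_laplacian {N : ℕ} (u : EuclideanSpace ℝ (Fin N) → ℝ)
    (x : EuclideanSpace ℝ (Fin N)) : lap u x = Δ u x := by
  rw [InnerProductSpace.laplacian_eq_iteratedFDeriv_orthonormalBasis u
    (EuclideanSpace.basisFun (Fin N) ℝ)]
  simp only [lap, EuclideanSpace.basisFun_apply]

theorem no_nontrivial_solution_critical_or_supercritical {N : ℕ} (hN : 3 ≤ N)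
    (m κ p : ℝ) (hm : 0 < m) (hκ : 0 < κ)
    (hp : ((N : ℝ) + 2) / ((N : ℝ) - 2) ≤ p)
    (u : EuclideanSpace ℝ (Fin N) → ℝ) (hu : ContDiff ℝ 2 u)
    (hunonneg : ∀ x, 0 ≤ u x)
    (heq : ∀ x, -lap u x + m * u x = κ * u x ^ p)
    (C c : ℝ) (hC : 0 < C) (hc : 0 < c)
    (hdecay : ∀ x, u x + ‖gradient u x‖ ≤ C * Real.exp (-c * ‖x‖)) :
    ∀ x, u x = 0 := by
  have hp_pos : 0 < p := zero_lt_one.trans (one_lt_of_critical_le (by exact_mod_cast hN) hp)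
  have hu_mem : ∀ q, MemLp u q volume :=
    memLp_of_norm_le_exp (C := C) hu.continuous.aestronglyMeasurable hc fun x ↦ by
      rw [norm_of_nonneg (hunonneg x)]
      linarith [hdecay x, norm_nonneg (∇ u x)]
  have hgrad_mem : MemLp (∇ u) 2 volume :=
    have hgrad : Continuous (∇ u) := (contDiff_gradient (m := 1) hu (by norm_num)).continuous
    memLp_of_norm_le_exp (C := C) hgrad.aestronglyMeasurable hc
      (fun x ↦ by linarith [hdecay x, hunonneg x]) 2
  have heq' (x) : -Δ u x + m * u x = κ * (|u x| ^ (p - 1) * u x) := by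
    rw [← lap_eq_laplacian, heq, abs_of_nonneg (hunonneg x),
      ← rpow_add_one' (hunonneg x) (by simpa using hp_pos.ne'), sub_add_cancel]
  exact no_nontrivial_solution_critical_or_supercritical_general
    (by rwa [finrank_euclideanSpace_fin]) hm hκ.le (by rwa [finrank_euclideanSpace_fin]) hu heq'
    (hu_mem 2) hgrad_mem (hu_mem _)
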